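/- Let C and D be categories, E : D → C and F : C → D functors, and suppose given an adjunction E ⊣ F whose counit ε : E ∘ F → id_C is an isomorphism of functors. For a natural endomorphism z of the identity functor of D, define Z(E)(z), at each object N of C, as the composite ε_N ∘ E(z_{F(N)}) ∘ (ε_N)^{-1} : N → N. Then: (i) Z(E)(z) is a natural endomorphism of the identity functor of C, so Z(E) defines a map End(id_D) → End(id_C); (ii) Z(E) is a homomorphism of monoids for composition (and of rings when C and D are preadditive), sending the identity to the identity; (iii) for every object M of D one has (Z(E)(z))_{E(M)} = E(z_M), i.e. the square formed by evaluation of the centers at M and at E(M) and by the map induced by E on endomorphisms commutes. -/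

import Mathlib

open CategoryTheory

/-- Let `E : D ⥤ C` and `F : C ⥤ D` with an adjunction
`E ⊣ F` whose counit `ε : E ∘ F ⟶ id_C` is an isomorphism.  For
`z ∈ End (𝟭 D)` define `Z(E)(z)` at `N` as `ε_N ∘ E(z_{F N}) ∘ ε_N⁻¹`.
Then (i) this is a natural endomorphism of `𝟭 C`, so `Z(E)` is a map
`End (𝟭 D) → End (𝟭 C)`; (ii) `Z(E)` is a monoid homomorphism for
composition; (iii) for every `M` in `D` one has
`(Z(E)(z))_{E(M)} = E(z_M)`. -/
theorem stmt_7 {C D : Type*} [Category C] [Category D]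
    (E : D ⥤ C) (F : C ⥤ D) (adj : E ⊣ F) [IsIso adj.counit] :
    ∃ Z : End (𝟭 D) →* End (𝟭 C),
      (∀ (z : End (𝟭 D)) (N : C),
        (Z z).app N =
          inv (adj.counit.app N) ≫ E.map (z.app (F.obj N)) ≫ adj.counit.app N) ∧
      (∀ (z : End (𝟭 D)) (M : D), (Z z).app (E.obj M) = E.map (z.app M)) := by
  have key : ∀ (z : End (𝟭 D)) {N N' : C} (f : N ⟶ N'),
      f ≫ inv (adj.counit.app N') ≫ E.map (z.app (F.obj N')) ≫ adj.counit.app N' =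
      (inv (adj.counit.app N) ≫ E.map (z.app (F.obj N)) ≫ adj.counit.app N) ≫ f := by
    intro z N N' f
    have h1 : E.map (F.map f) ≫ adj.counit.app N' = adj.counit.app N ≫ f :=
      adj.counit.naturality f
    have h2 : F.map f ≫ z.app (F.obj N') = z.app (F.obj N) ≫ F.map f :=
      z.naturality (F.map f)
    have h3 : f ≫ inv (adj.counit.app N') = inv (adj.counit.app N) ≫ E.map (F.map f) := by
      rw [IsIso.comp_inv_eq, Category.assoc]
      exact (by rw [h1]; exact (IsIso.inv_hom_id_assoc (adj.counit.app N) f).symm)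
    have h4 : E.map (F.map f) ≫ E.map (z.app (F.obj N')) =
        E.map (z.app (F.obj N)) ≫ E.map (F.map f) := by
      have := congrArg (fun g => E.map g) h2
      exact (E.map_comp _ _).symm.trans (this.trans (E.map_comp _ _))
    calc _ = (f ≫ inv (adj.counit.app N')) ≫ E.map (z.app (F.obj N')) ≫
              adj.counit.app N' := (Category.assoc _ _ _).symm
      _ = inv (adj.counit.app N) ≫ (E.map (F.map f) ≫ E.map (z.app (F.obj N'))) ≫
            adj.counit.app N' := by rw [h3]; simp only [Category.assoc]
      _ = inv (adj.counit.app N) ≫ E.map (z.app (F.obj N)) ≫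
            (E.map (F.map f) ≫ adj.counit.app N') := by
          rw [h4]; simp only [Category.assoc]
      _ = _ := by rw [h1]; simp only [Category.assoc]
  refine ⟨{ toFun := fun z =>
              { app := fun N => inv (adj.counit.app N) ≫ E.map (z.app (F.obj N)) ≫
                  adj.counit.app N
                naturality := fun _ _ f => key z f }
            map_one' := ?_
            map_mul' := ?_ }, fun _ _ => rfl, ?_⟩
  · apply NatTrans.ext
    funext N
    change inv (adj.counit.app N) ≫ E.map (𝟙 (F.obj N)) ≫ adj.counit.app N = 𝟙 N
    rw [E.map_id]
    exact (congrArg _ (Category.id_comp _)).trans (IsIso.inv_hom_id _)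
  · intro x y
    apply NatTrans.ext
    funext N
    change inv (adj.counit.app N) ≫ E.map (y.app (F.obj N) ≫ x.app (F.obj N)) ≫
        adj.counit.app N =
      (inv (adj.counit.app N) ≫ E.map (y.app (F.obj N)) ≫ adj.counit.app N) ≫
      (inv (adj.counit.app N) ≫ E.map (x.app (F.obj N)) ≫ adj.counit.app N)
    simp
  · intro z M
    change inv (adj.counit.app (E.obj M)) ≫ E.map (z.app (F.obj (E.obj M))) ≫
        adj.counit.app (E.obj M) = E.map (z.app M)
    rw [IsIso.inv_comp_eq]
    have h0 : E.map (adj.unit.app M) ≫ adj.counit.app (E.obj M) = 𝟙 _ :=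
      adj.left_triangle_components M
    have hu : IsIso (E.map (adj.unit.app M)) := by
      have : E.map (adj.unit.app M) = inv (adj.counit.app (E.obj M)) :=
        IsIso.eq_inv_of_inv_hom_id h0
      rw [this]; infer_instance
    rw [← cancel_epi (E.map (adj.unit.app M))]
    have h2 : adj.unit.app M ≫ z.app (F.obj (E.obj M)) = z.app M ≫ adj.unit.app M :=
      z.naturality (adj.unit.app M)
    have h3 : E.map (adj.unit.app M) ≫ E.map (z.app (F.obj (E.obj M))) =
        E.map (z.app M) ≫ E.map (adj.unit.app M) :=
      (E.map_comp _ _).symm.trans ((congrArg (fun g => E.map g) h2).trans (E.map_comp _ _))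
    calc _ = (E.map (adj.unit.app M) ≫ E.map (z.app (F.obj (E.obj M)))) ≫
              adj.counit.app (E.obj M) := (Category.assoc _ _ _).symm
      _ = E.map (z.app M) ≫ (E.map (adj.unit.app M) ≫ adj.counit.app (E.obj M)) := by
          rw [h3]; exact Category.assoc _ _ _
      _ = E.map (z.app M) := by rw [h0]; exact Category.comp_id _
      _ = (E.map (adj.unit.app M) ≫ adj.counit.app (E.obj M)) ≫ E.map (z.app M) := by
          rw [h0]; exact (Category.id_comp _).symm
      _ = _ := Category.assoc _ _ _
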